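/- arXiv:0802.3434 — 2 statements merged into one kernel-verified Lean document; each statement's English description precedes it below -/
import Mathlib

section
/- Let X = {0,1}^ℕ with the shift T and let 0 ≤ a ≤ 1. If a_n = a for all n ≥ 1 (constant sequence), then the only shift-invariant Borel probability measure μ with μ([0^n]) = a for all n ≥ 1 is μ = a δ_{0^∞} + (1−a) δ_{1^∞}, where 0^∞ and 1^∞ are the constant sequences of zeros and of ones; consequently the recurrence set R(a; {[0^n]}_{n≥1}) has zero Bowen topological entropy. -/
open MeasureTheory Filter Topology Set
open scoped ENNReal NNReal

/-!  General definitions: Bowen topological entropy (via covers by Bowen balls),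
measure-theoretic (Kolmogorov–Sinai) entropy, generic points, saturated systems,
and the specification property. -/

variable {X : Type*}

/-- The Bowen ball of center `x`, order `n`, radius `ε` (for the metric
`d_n(x,y) = max_{0 ≤ j < n} d(T^j x, T^j y)`). -/
def bowenBall [PseudoMetricSpace X] (T : X → X) (x : X) (n : ℕ) (ε : ℝ) : Set X :=
  {y | ∀ j < n, dist (T^[j] x) (T^[j] y) < ε}

/-- `H_n^s(Z,ε)`: infimum of `Σ_i exp(-s n_i)` over countable covers of `Z` by Bowen balls
`B_{n_i}(x_i,ε)` with all `n_i ≥ n`. -/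
noncomputable def bowenH [PseudoMetricSpace X] (T : X → X) (Z : Set X) (s ε : ℝ) (n : ℕ) :
    ℝ≥0∞ :=
  ⨅ (C : Set (X × ℕ)) (_ : C.Countable) (_ : ∀ p ∈ C, n ≤ p.2)
    (_ : Z ⊆ ⋃ p ∈ C, bowenBall T p.1 p.2 ε),
    ∑' p : C, ENNReal.ofReal (Real.exp (-s * ((p : X × ℕ).2 : ℝ)))

/-- `h_top(Z,ε)`: the critical exponent of `s ↦ H^s(Z,ε) = sup_n H_n^s(Z,ε)`. -/
noncomputable def bowenEntropyRes [PseudoMetricSpace X] (T : X → X) (Z : Set X) (ε : ℝ) :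
    ℝ≥0∞ :=
  sInf ((fun s : ℝ≥0 => (s : ℝ≥0∞)) '' {s : ℝ≥0 | (⨆ n, bowenH T Z (s : ℝ) ε n) = 0})

/-- Bowen topological entropy of a subset `Z`: `h_top(Z) = lim_{ε → 0} h_top(Z,ε)`
(the limit being a supremum by monotonicity in `ε`). -/
noncomputable def bowenEntropy [PseudoMetricSpace X] (T : X → X) (Z : Set X) : ℝ≥0∞ :=
  ⨆ (ε : ℝ) (_ : 0 < ε), bowenEntropyRes T Z ε

/-- Entropy of the partition `P ∨ T⁻¹P ∨ ⋯ ∨ T⁻⁽ⁿ⁻¹⁾P`, where a countable partition is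
encoded as a function `P : X → ℕ`: it is the Shannon entropy of the map
`x ↦ (P x, P (T x), …, P (Tⁿ⁻¹ x))`. -/
noncomputable def partInfo [MeasurableSpace X] (T : X → X) (μ : Measure X) (P : X → ℕ)
    (n : ℕ) : ℝ≥0∞ :=
  ∑' l : List ℕ, ENNReal.ofReal (Real.negMulLog
    ((μ ((fun x => (List.range n).map fun j => P (T^[j] x)) ⁻¹' {l})).toReal))

/-- Measure-theoretic (Kolmogorov–Sinai) entropy `h_μ(T)`: supremum over finite measurable
partitions `P` of `lim_n (1/n) H_μ(P ∨ T⁻¹P ∨ ⋯ ∨ T⁻⁽ⁿ⁻¹⁾P)` (the limit exists by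
subadditivity, so it may be written as a `liminf`). -/
noncomputable def ksEntropy [MeasurableSpace X] (T : X → X) (μ : Measure X) : ℝ≥0∞ :=
  ⨆ (P : X → ℕ) (_ : Measurable P) (_ : (Set.range P).Finite),
    Filter.atTop.liminf fun n : ℕ => partInfo T μ P n / (n : ℝ≥0∞)

/-- `x` is a generic point for `μ` : the empirical measures `(1/n) Σ_{j<n} δ_{T^j x}`
converge to `μ` in the weak-star topology, i.e. Birkhoff averages of every continuous
function converge to its integral. -/
def IsGeneric [TopologicalSpace X] [MeasurableSpace X] (T : X → X) (μ : Measure X)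
    (x : X) : Prop :=
  ∀ f : C(X, ℝ), Tendsto (fun n : ℕ => (∑ j ∈ Finset.range n, f (T^[j] x)) / (n : ℝ))
    atTop (𝓝 (∫ y, f y ∂μ))

/-- `μ ∈ V(x)` : `μ` is a weak-star limit point of the empirical measures of `x`. -/
def IsLimitMeasure [TopologicalSpace X] [MeasurableSpace X] (T : X → X) (x : X)
    (μ : Measure X) : Prop :=
  ∃ φ : ℕ → ℕ, StrictMono φ ∧ ∀ f : C(X, ℝ),
    Tendsto (fun m : ℕ => (∑ j ∈ Finset.range (φ m), f (T^[j] x)) / (φ m : ℝ))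
      atTop (𝓝 (∫ y, f y ∂μ))

/-- A system is saturated if `h_top(G_μ) = h_μ` for every invariant Borel probability
measure `μ`. -/
def Saturated [PseudoMetricSpace X] [MeasurableSpace X] (T : X → X) : Prop :=
  ∀ μ : Measure X, IsProbabilityMeasure μ → MeasurePreserving T μ μ →
    bowenEntropy T {x | IsGeneric T μ x} = ksEntropy T μ

/-- The specification property. -/
def SpecificationProperty [PseudoMetricSpace X] (T : X → X) : Prop :=
  ∀ ε : ℝ, 0 < ε → ∃ m : ℕ, 1 ≤ m ∧
    ∀ k : ℕ, 2 ≤ k → ∀ x : ℕ → X, ∀ a b : ℕ → ℕ,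
      (∀ i < k, a i ≤ b i) →
      (∀ i, i + 1 < k → b i + m ≤ a (i + 1)) →
      ∃ y : X, ∀ i < k, ∀ n ≤ b i - a i,
        dist (T^[a i + n] y) (T^[n] (x i)) < ε

/-! Symbolic dynamics on `X = {0,1}^ℕ`. -/

/-- The metric `d(x,y) = (1/2)^(first difference)` on the symbolic space `{0,1}^ℕ`. -/
noncomputable instance : MetricSpace (ℕ → Bool) := PiNat.metricSpace

/-- The shift map on `{0,1}^ℕ`. -/
def shift : (ℕ → Bool) → ℕ → Bool := fun x n => x (n + 1)

/-- The cylinder `[w]` of all sequences beginning with the finite word `w`. -/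
def cyl (w : List Bool) : Set (ℕ → Bool) :=
  {x | ∀ i : Fin w.length, x i.1 = w.get i}

/-- `R(x,[w]) = r` : the frequency of visits of the orbit of `x` to the cylinder `[w]`
exists and equals `r`. -/
def hasFreq (w : List Bool) (x : ℕ → Bool) (r : ℝ) : Prop :=
  Filter.Tendsto (fun n : ℕ =>
      (∑ j ∈ Finset.range n, (cyl w).indicator (fun _ => (1 : ℝ)) (shift^[j] x)) / (n : ℝ))
    Filter.atTop (nhds r)

/-!
A sequence is determined on `{0, …, L}` by its first symbol and by the positions `j < L` where
`x j ≠ x (j + 1)`. Equality of the frequencies of `[0]` and `[00]` says that these positions have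
density zero.

For an invariant measure this means that almost every sequence never switches, so the measure is
carried by the two constant sequences. For a point it means that its prefix of length `L` is coded
by a subset of `{0, …, L - 1}` of size `o(L)`; there are only `exp (o(L))` such subsets, so the
set of all these points has zero entropy.
-/

section BowenEntropy

open scoped Finset

variable [PseudoMetricSpace X] {T : X → X} {Z : Set X} {ε : ℝ} {F : ℕ → Finset X}

lemma bowenH_le_tsum_card (hZ : ∀ z ∈ Z, ∃ᶠ N in atTop, ∃ y ∈ F N, z ∈ bowenBall T y N ε) (s : ℝ)
    {n k : ℕ} (hnk : n ≤ k) :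
    bowenH T Z s ε n ≤
      ∑' N : ℕ, (#(F (N + k)) : ℝ≥0∞) * ENNReal.ofReal (Real.exp (-s * (N + k : ℕ))) := by
  let C : ℕ → Finset (X × ℕ) := fun N => (F (N + k)).map ⟨(·, N + k), Prod.mk_left_injective _⟩
  have order_ge : ∀ p ∈ ⋃ N, (C N : Set (X × ℕ)), n ≤ p.2 := by
    intro p hp
    obtain ⟨N, hN⟩ := mem_iUnion.1 hp
    obtain ⟨y, -, rfl⟩ := Finset.mem_map.1 hN
    exact hnk.trans (Nat.le_add_left k N)
  have covers : Z ⊆ ⋃ p ∈ ⋃ N, (C N : Set (X × ℕ)), bowenBall T p.1 p.2 ε := by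
    intro z hz
    obtain ⟨N, hkN, y, hy, hzy⟩ := frequently_atTop.1 (hZ z hz) k
    obtain ⟨N, rfl⟩ := Nat.exists_eq_add_of_le' hkN
    exact mem_biUnion (mem_iUnion.2 ⟨N, Finset.mem_map_of_mem _ hy⟩) hzy
  calc
    bowenH T Z s ε n
      ≤ ∑' p : ⋃ N, (C N : Set (X × ℕ)), ENNReal.ofReal (Real.exp (-s * (p : X × ℕ).2)) :=
        iInf₂_le_of_le _ (countable_iUnion fun N => (C N).countable_toSet) <|
          iInf₂_le order_ge covers
    _ ≤ ∑' N, ∑' p : (C N : Set (X × ℕ)), ENNReal.ofReal (Real.exp (-s * (p : X × ℕ).2)) :=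
        ENNReal.tsum_iUnion_le_tsum (fun p : X × ℕ => ENNReal.ofReal (Real.exp (-s * p.2))) _
    _ = _ := by
        refine tsum_congr fun N => ?_
        refine ((C N).tsum_subtype fun p => ENNReal.ofReal (Real.exp (-s * p.2))).trans ?_
        simp only [C, Finset.sum_map, Function.Embedding.coeFn_mk, Finset.sum_const, nsmul_eq_mul]

lemma bowenEntropyRes_le_of_tsum_ne_top
    (hZ : ∀ z ∈ Z, ∃ᶠ N in atTop, ∃ y ∈ F N, z ∈ bowenBall T y N ε) {s : ℝ≥0}
    (hs : ∑' N : ℕ, (#(F N) : ℝ≥0∞) * ENNReal.ofReal (Real.exp (-s * N)) ≠ ∞) :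
    bowenEntropyRes T Z ε ≤ s := by
  refine sInf_le ⟨s, ENNReal.iSup_eq_zero.2 fun n => ?_, rfl⟩
  exact nonpos_iff_eq_zero.1 <| ge_of_tendsto (ENNReal.tendsto_sum_nat_add _ hs) <|
    (eventually_ge_atTop n).mono fun k hnk => bowenH_le_tsum_card hZ s hnk

lemma bowenEntropyRes_le_of_card_le_exp
    (hZ : ∀ z ∈ Z, ∃ᶠ N in atTop, ∃ y ∈ F N, z ∈ bowenBall T y N ε) {C : ℝ} {c : ℝ≥0}
    (hF : ∀ N, (#(F N) : ℝ) ≤ C * Real.exp (c * N)) :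
    bowenEntropyRes T Z ε ≤ c := by
  refine ENNReal.le_of_forall_pos_le_add fun η hη _ => ?_
  rw [← ENNReal.coe_add]
  refine bowenEntropyRes_le_of_tsum_ne_top hZ ?_
  have term_le (N : ℕ) : (#(F N) : ℝ≥0∞) * ENNReal.ofReal (Real.exp (-(c + η : ℝ≥0) * N)) ≤
      ENNReal.ofReal (C * Real.exp (-η) ^ N) := by
    rw [← ENNReal.ofReal_natCast, ← ENNReal.ofReal_mul (Nat.cast_nonneg _)]
    refine ENNReal.ofReal_le_ofReal <|
      (mul_le_mul_of_nonneg_right (hF N) (Real.exp_nonneg _)).trans_eq ?_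
    rw [mul_assoc, ← Real.exp_add, ← Real.exp_nat_mul]
    push_cast
    ring_nf
  have summable_bound : Summable fun N : ℕ => C * Real.exp (-η) ^ N :=
    have ratio_lt_one : Real.exp (-η) < 1 := Real.exp_lt_one_iff.2 (by simpa using hη)
    (summable_geometric_of_lt_one (Real.exp_nonneg _) ratio_lt_one).mul_left C
  exact ne_top_of_le_ne_top summable_bound.tsum_ofReal_ne_top (ENNReal.tsum_le_tsum term_le)

end BowenEntropy

section SmallSubsets

open scoped Finset

variable {α : Type*}

lemma card_powerset_filter_card_le (S : Finset α) {q : ℝ} (hq : 0 ≤ q) (d : ℝ) :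
    (#{D ∈ S.powerset | (#D : ℝ) ≤ d} : ℝ) ≤ Real.exp (q * d) * (1 + Real.exp (-q)) ^ #S := by
  have weight_ge : ∀ D ∈ S.powerset.filter fun D => (#D : ℝ) ≤ d,
      Real.exp (-(q * d)) ≤ Real.exp (-q) ^ #D := by
    intro D hD
    rw [← Real.exp_nat_mul]
    exact Real.exp_le_exp.2 (by nlinarith [(Finset.mem_filter.1 hD).2])
  have sum_weights : ∑ D ∈ S.powerset, Real.exp (-q) ^ #D = (1 + Real.exp (-q)) ^ #S := by
    simpa [add_comm] using Finset.sum_pow_mul_eq_add_pow (Real.exp (-q)) 1 S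
  calc
    (#{D ∈ S.powerset | (#D : ℝ) ≤ d} : ℝ)
      = Real.exp (q * d) * (#{D ∈ S.powerset | (#D : ℝ) ≤ d} * Real.exp (-(q * d))) := by
        rw [mul_left_comm, ← Real.exp_add, add_neg_cancel, Real.exp_zero, mul_one]
    _ ≤ Real.exp (q * d) * ∑ D ∈ S.powerset with (#D : ℝ) ≤ d, Real.exp (-q) ^ #D := by
        gcongr
        simpa only [nsmul_eq_mul] using Finset.card_nsmul_le_sum _ _ _ weight_ge
    _ ≤ Real.exp (q * d) * (1 + Real.exp (-q)) ^ #S := by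
        rw [← sum_weights]
        gcongr
        exact Finset.filter_subset _ _

lemma exists_card_powerset_filter_card_le_exp {c : ℝ} (hc : 0 < c) :
    ∃ δ > 0, ∀ S : Finset α,
      (#{D ∈ S.powerset | (#D : ℝ) ≤ δ * #S} : ℝ) ≤ Real.exp (c * #S) := by
  refine ⟨c / 2 / (2 / c), by positivity, fun S => ?_⟩
  set q := 2 / c
  have exp_neg_le : Real.exp (-q) ≤ c / 2 := by
    rw [Real.exp_neg, inv_le_comm₀ (Real.exp_pos _) (by positivity), inv_div]
    linarith [Real.add_one_le_exp q]
  have base_le : 1 + Real.exp (-q) ≤ Real.exp (c / 2) := by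
    linarith [Real.add_one_le_exp (c / 2)]
  have exponent_eq : q * (c / 2 / q * #S) = c / 2 * #S := by
    rw [← mul_assoc, mul_div_cancel₀ _ (by positivity)]
  calc
    (#{D ∈ S.powerset | (#D : ℝ) ≤ c / 2 / q * #S} : ℝ)
      ≤ Real.exp (q * (c / 2 / q * #S)) * (1 + Real.exp (-q)) ^ #S :=
        card_powerset_filter_card_le S (by positivity) _
    _ ≤ Real.exp (c / 2 * #S) * Real.exp (c / 2) ^ #S := by
        rw [exponent_eq]
        gcongr
    _ = Real.exp (c * #S) := by
        rw [← Real.exp_nat_mul, ← Real.exp_add]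
        ring_nf

end SmallSubsets

section Measure

variable [MeasurableSpace X] {μ : Measure X}

lemma preimage_iterate_ae_eq_of_measure_inter_eq [IsFiniteMeasure μ] {T : X → X}
    (hT : MeasurePreserving T μ μ) {E : Set X} (hE : MeasurableSet E)
    (h : μ (E ∩ T ⁻¹' E) = μ E) (n : ℕ) : T^[n] ⁻¹' E =ᵐ[μ] E := by
  have hTE : μ (T ⁻¹' E) = μ E := hT.measure_preimage hE.nullMeasurableSet
  have hmeas : NullMeasurableSet (E ∩ T ⁻¹' E) μ :=
    (hE.inter (hT.measurable hE)).nullMeasurableSet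
  have inter_ae_eq : (E ∩ T ⁻¹' E : Set X) =ᵐ[μ] E :=
    ae_eq_of_subset_of_measure_ge inter_subset_left h.ge hmeas (measure_ne_top _ _)
  have inter_ae_eq_preimage : (E ∩ T ⁻¹' E : Set X) =ᵐ[μ] T ⁻¹' E :=
    ae_eq_of_subset_of_measure_ge inter_subset_right (hTE.trans h.symm).le hmeas
      (measure_ne_top _ _)
  exact hT.quasiMeasurePreserving.preimage_iterate_ae_eq n
    (inter_ae_eq_preimage.symm.trans inter_ae_eq)

lemma eq_smul_dirac_add_smul_dirac [MeasurableSingletonClass X] [IsProbabilityMeasure μ]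
    {p q : X} (hpq : p ≠ q) (h : ∀ᵐ x ∂μ, x = p ∨ x = q) :
    μ = μ {p} • Measure.dirac p + (1 - μ {p}) • Measure.dirac q := by
  have compl_ae_eq : ({p}ᶜ : Set X) =ᵐ[μ] ({q} : Set X) := by
    filter_upwards [h] with x hx
    refine propext (?_ : x ≠ p ↔ x = q)
    rcases hx with rfl | rfl
    · simp [hpq]
    · simp [hpq.symm]
  rw [← prob_compl_eq_one_sub (measurableSet_singleton p), measure_congr compl_ae_eq,
    ← Measure.restrict_singleton, ← Measure.restrict_singleton,
    ← Measure.restrict_congr_set compl_ae_eq,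
    Measure.restrict_add_restrict_compl (measurableSet_singleton p)]

end Measure

section ZeroOneShift

open scoped Finset

lemma shift_iterate_apply (j : ℕ) (x : ℕ → Bool) (n : ℕ) : shift^[j] x n = x (n + j) := by
  induction j generalizing n with
  | zero => rfl
  | succ j ih =>
    rw [Function.iterate_succ_apply', shift, ih, add_right_comm, add_assoc]

lemma mem_cyl_singleton {b : Bool} {x : ℕ → Bool} : x ∈ cyl [b] ↔ x 0 = b := by
  simp [cyl]

lemma mem_cyl_pair {b c : Bool} {x : ℕ → Bool} : x ∈ cyl [b, c] ↔ x 0 = b ∧ x 1 = c := by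
  simp [cyl, Fin.forall_fin_two]

lemma measurableSet_cyl (w : List Bool) : MeasurableSet (cyl w) := by
  simp only [cyl, ofPred_forall]
  exact MeasurableSet.iInter fun i => measurable_pi_apply _ (measurableSet_singleton _)

lemma ae_eq_const_of_measure_cyl_eq {μ : Measure (ℕ → Bool)} [IsFiniteMeasure μ]
    (hT : MeasurePreserving shift μ μ) (h : μ (cyl [false, false]) = μ (cyl [false])) :
    ∀ᵐ x ∂μ, ∃ b, x = fun _ => b := by
  have inter_eq : cyl [false] ∩ shift ⁻¹' cyl [false] = cyl [false, false] := by
    ext x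
    simp [mem_cyl_singleton, mem_cyl_pair, shift]
  have iterate_ae (n : ℕ) : shift^[n] ⁻¹' cyl [false] =ᵐ[μ] cyl [false] :=
    preimage_iterate_ae_eq_of_measure_inter_eq hT (measurableSet_cyl _) (by rw [inter_eq, h]) n
  filter_upwards [ae_all_iff.2 fun n => (iterate_ae n).mem_iff] with x hx
  refine ⟨x 0, funext fun n => Bool.eq_iff_iff.2 (not_iff_not.1 ?_)⟩
  simpa [mem_cyl_singleton, shift_iterate_apply] using hx n

lemma eq_smul_dirac_const_add_smul_dirac_const {μ : Measure (ℕ → Bool)} [IsProbabilityMeasure μ]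
    (hT : MeasurePreserving shift μ μ) (h : μ (cyl [false, false]) = μ (cyl [false])) :
    μ = μ (cyl [false]) • Measure.dirac (fun _ => false) +
      (1 - μ (cyl [false])) • Measure.dirac (fun _ => true) := by
  have ae_const := ae_eq_const_of_measure_cyl_eq hT h
  have cyl_ae_eq : cyl [false] =ᵐ[μ] ({fun _ => false} : Set (ℕ → Bool)) := by
    filter_upwards [ae_const] with x ⟨b, hx⟩
    refine propext (?_ : x ∈ cyl [false] ↔ x = fun _ => false)
    subst hx
    simp [mem_cyl_singleton, funext_iff]
  rw [measure_congr cyl_ae_eq]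
  refine eq_smul_dirac_add_smul_dirac (fun hne => Bool.false_ne_true (congrFun hne 0)) ?_
  filter_upwards [ae_const] with x ⟨b, hx⟩
  cases b
  · exact Or.inl hx
  · exact Or.inr hx

/-- The positions `j < L` at which a `0`-`1` sequence changes its symbol. Together with the first
symbol they code the prefix of length `L + 1`. -/
def switchTimes (L : ℕ) (x : ℕ → Bool) : Finset ℕ :=
  {j ∈ Finset.range L | x j ≠ x (j + 1)}

lemma eq_of_switchTimes_eq {L : ℕ} {x y : ℕ → Bool} (h0 : x 0 = y 0)
    (h : switchTimes L x = switchTimes L y) {n : ℕ} (hn : n ≤ L) : x n = y n := by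
  induction n with
  | zero => exact h0
  | succ n ih =>
    have same_switch : x n ≠ x (n + 1) ↔ y n ≠ y (n + 1) := by
      simpa [switchTimes, Nat.lt_of_succ_le hn] using Finset.ext_iff.1 h n
    rw [ih (Nat.le_of_succ_le hn)] at same_switch
    revert same_switch
    cases y n <;> cases x (n + 1) <;> cases y (n + 1) <;> decide

lemma card_switchTimes_eq_sum (L : ℕ) (x : ℕ → Bool) :
    (#(switchTimes L x) : ℝ) =
      2 * (∑ j ∈ Finset.range L, (cyl [false]).indicator (fun _ => (1 : ℝ)) (shift^[j] x) -
        ∑ j ∈ Finset.range L, (cyl [false, false]).indicator (fun _ => (1 : ℝ)) (shift^[j] x)) +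
      ((if x L = false then 1 else 0) - if x 0 = false then 1 else 0) := by
  classical
  -- Up to the telescoping term `1[x (j + 1) = 0] - 1[x j = 0]`, an occurrence of `10` at `j` is
  -- one of `01`, and the latter are counted by `[0]` minus `[00]`.
  rw [← Finset.sum_range_sub (fun j => if x j = false then (1 : ℝ) else 0),
    ← Finset.sum_sub_distrib, Finset.mul_sum, ← Finset.sum_add_distrib, switchTimes,
    Finset.natCast_card_filter]
  refine Finset.sum_congr rfl fun j _ => ?_
  simp only [indicator_apply, mem_cyl_singleton, mem_cyl_pair, shift_iterate_apply, zero_add,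
    add_comm 1 j]
  cases x j <;> cases x (j + 1) <;> norm_num

lemma tendsto_card_switchTimes_div {x : ℕ → Bool} {a : ℝ} (h0 : hasFreq [false] x a)
    (h00 : hasFreq [false, false] x a) :
    Tendsto (fun L : ℕ => (#(switchTimes L x) : ℝ) / L) atTop (𝓝 0) := by
  have boundary : Tendsto (fun L : ℕ =>
      ((if x L = false then (1 : ℝ) else 0) - if x 0 = false then 1 else 0) / L) atTop (𝓝 0) :=
    tendsto_bdd_div_atTop_nhds_zero (b := -1) (B := 1)
      (Eventually.of_forall fun L => by split_ifs <;> norm_num)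
      (Eventually.of_forall fun L => by split_ifs <;> norm_num) tendsto_natCast_atTop_atTop
  have lim := ((h0.sub h00).const_mul 2).add boundary
  rw [sub_self, mul_zero, add_zero] at lim
  refine lim.congr fun L => ?_
  rw [card_switchTimes_eq_sum]
  ring

lemma mem_bowenBall_shift {ε : ℝ} {M : ℕ} (hM : (1 / 2 : ℝ) ^ M < ε) {N : ℕ} {x y : ℕ → Bool}
    (h : ∀ i ≤ N + M, x i = y i) : y ∈ bowenBall shift x N ε := by
  intro j hj
  refine lt_of_le_of_lt (PiNat.mem_cylinder_iff_dist_le.1 fun i hi => ?_) hM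
  rw [shift_iterate_apply, shift_iterate_apply, h _ (by omega)]

lemma exists_finset_forall_card_switchTimes_le (L : ℕ) (d : ℝ) :
    ∃ A : Finset (ℕ → Bool), #A ≤ 2 * #{D ∈ (Finset.range L).powerset | (#D : ℝ) ≤ d} ∧
      ∀ x, (#(switchTimes L x) : ℝ) ≤ d → ∃ y ∈ A, ∀ i ≤ L, y i = x i := by
  classical
  let code : (ℕ → Bool) → Bool × Finset ℕ := fun x => (x 0, switchTimes L x)
  let codes : Finset (Bool × Finset ℕ) :=
    Finset.univ ×ˢ {D ∈ (Finset.range L).powerset | (#D : ℝ) ≤ d}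
  refine ⟨codes.image (Function.invFun code), ?_, fun x hx => ?_⟩
  · refine Finset.card_image_le.trans_eq ?_
    rw [Finset.card_product, Finset.card_univ, Fintype.card_bool]
  · have code_mem : code x ∈ codes := by
      simp only [code, codes, Finset.mem_product, Finset.mem_filter, Finset.mem_powerset]
      exact ⟨Finset.mem_univ _, Finset.filter_subset _ _, hx⟩
    have code_eq : code (Function.invFun code (code x)) = code x :=
      Function.apply_invFun_apply
    exact ⟨_, Finset.mem_image_of_mem _ code_mem, fun i hi =>
      eq_of_switchTimes_eq (congrArg Prod.fst code_eq) (congrArg Prod.snd code_eq) hi⟩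

lemma bowenEntropyRes_shift_le_of_tendsto_card_switchTimes {Z : Set (ℕ → Bool)}
    (hZ : ∀ x ∈ Z, Tendsto (fun L : ℕ => (#(switchTimes L x) : ℝ) / L) atTop (𝓝 0))
    {ε : ℝ} (hε : 0 < ε) {c : ℝ≥0} (hc : 0 < c) : bowenEntropyRes shift Z ε ≤ c := by
  obtain ⟨M, hM⟩ := exists_pow_lt_of_lt_one hε (by norm_num : (1 / 2 : ℝ) < 1)
  obtain ⟨δ, hδ, card_le⟩ := exists_card_powerset_filter_card_le_exp (α := ℕ) (NNReal.coe_pos.2 hc)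
  choose A card_A hA using fun L : ℕ => exists_finset_forall_card_switchTimes_le L (δ * L)
  refine bowenEntropyRes_le_of_card_le_exp (F := fun N => A (N + M)) (C := 2 * Real.exp (c * M))
    (fun x hx => Eventually.frequently ?_) fun N => ?_
  · have few_switches : ∀ᶠ L : ℕ in atTop, (#(switchTimes L x) : ℝ) ≤ δ * L := by
      filter_upwards [(hZ x hx).eventually_lt_const hδ, eventually_gt_atTop 0] with L hL hL0
      exact ((div_lt_iff₀ (Nat.cast_pos.2 hL0)).1 hL).le
    filter_upwards [(tendsto_add_atTop_nat M).eventually few_switches] with N hN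
    obtain ⟨y, hy, hyx⟩ := hA (N + M) x hN
    exact ⟨y, hy, mem_bowenBall_shift hM hyx⟩
  · have card_small := card_le (Finset.range (N + M))
    rw [Finset.card_range] at card_small
    calc
      (#(A (N + M)) : ℝ)
        ≤ 2 * #{D ∈ (Finset.range (N + M)).powerset | (#D : ℝ) ≤ δ * (N + M : ℕ)} := by
          exact_mod_cast card_A (N + M)
      _ ≤ 2 * Real.exp (c * (N + M : ℕ)) := by gcongr
      _ = 2 * Real.exp (c * M) * Real.exp (c * N) := by
          rw [mul_assoc, ← Real.exp_add]
          push_cast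
          ring_nf

lemma bowenEntropy_shift_eq_zero_of_tendsto_card_switchTimes {Z : Set (ℕ → Bool)}
    (hZ : ∀ x ∈ Z, Tendsto (fun L : ℕ => (#(switchTimes L x) : ℝ) / L) atTop (𝓝 0)) :
    bowenEntropy shift Z = 0 :=
  nonpos_iff_eq_zero.1 <| iSup₂_le fun ε hε => ENNReal.le_of_forall_pos_le_add fun c hc _ => by
    rw [zero_add]
    exact bowenEntropyRes_shift_le_of_tendsto_card_switchTimes hZ hε hc

end ZeroOneShift

theorem constant_frequencies_general :
    (∀ (a : ℝ) (μ : Measure (ℕ → Bool)), IsProbabilityMeasure μ → MeasurePreserving shift μ μ →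
      (μ (cyl [false])).toReal = a → (μ (cyl [false, false])).toReal = a →
      μ = ENNReal.ofReal a • Measure.dirac (fun _ => false) +
          ENNReal.ofReal (1 - a) • Measure.dirac (fun _ => true)) ∧
    ∀ Z : Set (ℕ → Bool), (∀ x ∈ Z, ∃ a, hasFreq [false] x a ∧ hasFreq [false, false] x a) →
      bowenEntropy shift Z = 0 := by
  refine ⟨fun a μ _ hT h0 h00 => ?_,
    fun Z hZ => bowenEntropy_shift_eq_zero_of_tendsto_card_switchTimes fun x hx => ?_⟩
  · subst h0
    rw [ENNReal.ofReal_sub _ ENNReal.toReal_nonneg, ENNReal.ofReal_one,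
      ENNReal.ofReal_toReal (measure_ne_top _ _)]
    exact eq_smul_dirac_const_add_smul_dirac_const hT <|
      (ENNReal.toReal_eq_toReal_iff' (measure_ne_top _ _) (measure_ne_top _ _)).1 h00
  · obtain ⟨a, h0, h00⟩ := hZ x hx
    exact tendsto_card_switchTimes_div h0 h00

/-- **Remark (final example of Section 5).** If `a_n = a` for all `n ≥ 1` (with
`0 ≤ a ≤ 1`), then the unique shift-invariant probability measure with `μ([0^n]) = a` for
all `n ≥ 1` is `a δ_{0^∞} + (1-a) δ_{1^∞}`, and the recurrence set
`R(a;{[0^n]}_{n≥1})` has zero Bowen topological entropy. -/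
theorem constant_frequencies (a : ℝ) (h0 : 0 ≤ a) (h1 : a ≤ 1) :
    (∀ μ : Measure (ℕ → Bool), IsProbabilityMeasure μ → MeasurePreserving shift μ μ →
      (∀ n : ℕ, 1 ≤ n → (μ (cyl (List.replicate n false))).toReal = a) →
      μ = ENNReal.ofReal a • Measure.dirac (fun _ => false) +
          ENNReal.ofReal (1 - a) • Measure.dirac (fun _ => true)) ∧
    bowenEntropy shift
      {x : ℕ → Bool | ∀ k : ℕ, 1 ≤ k → hasFreq (List.replicate k false) x a} = 0 :=
  ⟨fun μ hμ hT h => constant_frequencies_general.1 a μ hμ hT (h 1 le_rfl) (h 2 one_le_two),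
    constant_frequencies_general.2 _ fun _ hx => ⟨a, hx 1 le_rfl, hx 2 one_le_two⟩⟩
end

section
/- Let (X,T) be a dynamical system on a compact metric space and t ≥ 0. Then the set B^{(t)} = {x ∈ X : there exists μ ∈ V(x) with h_μ ≤ t} has Bowen topological entropy h_top(B^{(t)}) ≤ t. -/
open MeasureTheory Filter Topology Set
open scoped ENNReal NNReal

/-!  General definitions: Bowen topological entropy (via covers by Bowen balls),
measure-theoretic (Kolmogorov–Sinai) entropy, generic points, saturated systems,
and the specification property. -/

variable {X : Type*}

/-!
Cover `X` by finitely many small balls and follow each orbit by the sequence of their centers.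
If `μ ∈ V(x)` has entropy less than `h`, then for some `k` the words of length `k` have, with
respect to `μ`, Shannon entropy less than `k * h`; the code lengths of an almost optimal code
satisfy Kraft's inequality and have `μ`-mean less than `k * h`. The partition can be chosen with
boundaries that are null along orbits, so that for infinitely many `n` the first `n` overlapping
blocks of the itinerary of `x` have total code length at most `k * n * h`. By Kraft's inequality
there are, up to a constant factor, at most `exp (n * h)` itineraries of length `n` with this
property, and each of them is followed within one Bowen ball. For `s > h` the corresponding sums
of `exp (-s * n)` converge, so by the Borel–Cantelli lemma the points with this property for
infinitely many `n` form a null set for `H_N^s`. Rational code lengths suffice, so only countably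
many such null sets occur.
-/

section CoverEntropy

variable [PseudoMetricSpace X] {T : X → X} {Z W : Set X} {s ε : ℝ} {N : ℕ}

lemma bowenH_le_tsum {C : Set (X × ℕ)} (hC : C.Countable) (hN : ∀ p ∈ C, N ≤ p.2)
    (hZ : Z ⊆ ⋃ p ∈ C, bowenBall T p.1 p.2 ε) :
    bowenH T Z s ε N ≤ ∑' p : C, ENNReal.ofReal (Real.exp (-s * (p : X × ℕ).2)) :=
  iInf_le_of_le C <| iInf_le_of_le hC <| iInf_le_of_le hN <| iInf_le_of_le hZ le_rfl

lemma exists_cover_tsum_lt_of_bowenH_lt {a : ℝ≥0∞} (h : bowenH T Z s ε N < a) :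
    ∃ C : Set (X × ℕ), C.Countable ∧ (∀ p ∈ C, N ≤ p.2) ∧
      (Z ⊆ ⋃ p ∈ C, bowenBall T p.1 p.2 ε) ∧
      ∑' p : C, ENNReal.ofReal (Real.exp (-s * (p : X × ℕ).2)) < a := by
  simpa only [bowenH, iInf_lt_iff, exists_prop] using h

lemma bowenH_mono (h : Z ⊆ W) : bowenH T Z s ε N ≤ bowenH T W s ε N :=
  iInf_mono fun _ => iInf_mono fun _ => iInf_mono fun _ =>
    iInf_mono' fun hW => ⟨h.trans hW, le_rfl⟩

lemma bowenH_le_of_forall_subset_bowenBall {n : ℕ} (hN : N ≤ n)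
    (hZ : ∀ x ∈ Z, Z ⊆ bowenBall T x n ε) :
    bowenH T Z s ε N ≤ ENNReal.ofReal (Real.exp (-s * n)) := by
  obtain rfl | ⟨x, hx⟩ := Z.eq_empty_or_nonempty
  · exact (bowenH_le_tsum countable_empty (by simp) (by simp)).trans (by simp)
  · refine (bowenH_le_tsum (countable_singleton (x, n)) (by simpa using hN)
      (by simpa using hZ x hx)).trans_eq ?_
    rw [tsum_singleton (x, n) fun p : X × ℕ => ENNReal.ofReal (Real.exp (-s * p.2))]

lemma bowenEntropy_mono (h : Z ⊆ W) : bowenEntropy T Z ≤ bowenEntropy T W := by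
  refine iSup₂_mono fun ε _ => sInf_le_sInf (image_mono fun s hs => ?_)
  exact le_antisymm ((iSup_mono fun _ => bowenH_mono h).trans_eq hs) zero_le

lemma bowenEntropyRes_le {t : ℝ≥0∞} (h : ∀ s : ℝ≥0, t < s → ∀ N, bowenH T Z s ε N = 0) :
    bowenEntropyRes T Z ε ≤ t := by
  refine ENNReal.le_of_forall_pos_le_add fun δ hδ ht => sInf_le ⟨t.toNNReal + δ, ?_, ?_⟩
  · have hlt : t < ((t.toNNReal + δ : ℝ≥0) : ℝ≥0∞) := by
      rw [ENNReal.coe_add, ENNReal.coe_toNNReal ht.ne]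
      exact ENNReal.lt_add_right ht.ne (ENNReal.coe_ne_zero.2 hδ.ne')
    simp only [mem_ofPred_eq, h _ hlt, iSup_const]
  · simp [ENNReal.coe_toNNReal ht.ne]

lemma bowenH_iUnion_le {ι : Type*} [Countable ι] (Z : ι → Set X) :
    bowenH T (⋃ i, Z i) s ε N ≤ ∑' i, bowenH T (Z i) s ε N := by
  refine ENNReal.le_of_forall_pos_le_add fun δ hδ hfin => ?_
  obtain ⟨δ', hδ', hsum⟩ := ENNReal.exists_pos_sum_of_countable'
    (ε := (δ : ℝ≥0∞)) (ENNReal.coe_ne_zero.2 hδ.ne') ι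
  choose C hC hN hcover hlt using fun i => exists_cover_tsum_lt_of_bowenH_lt
    (ENNReal.lt_add_right (ENNReal.ne_top_of_tsum_ne_top hfin.ne i) (hδ' i).ne')
  calc bowenH T (⋃ i, Z i) s ε N
      ≤ ∑' p : (⋃ i, C i), ENNReal.ofReal (Real.exp (-s * (p : X × ℕ).2)) := by
        refine bowenH_le_tsum (countable_iUnion hC) ?_ ?_
        · simpa only [mem_iUnion, forall_exists_index] using fun p i => hN i p
        · exact iUnion_subset fun i =>
            (hcover i).trans (biUnion_subset_biUnion_left (subset_iUnion C i))
    _ ≤ ∑' (i) (p : C i), ENNReal.ofReal (Real.exp (-s * (p : X × ℕ).2)) :=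
        ENNReal.tsum_iUnion_le_tsum (fun p : X × ℕ => ENNReal.ofReal (Real.exp (-s * p.2))) C
    _ ≤ ∑' i, (bowenH T (Z i) s ε N + δ' i) := ENNReal.tsum_le_tsum fun i => (hlt i).le
    _ = ∑' i, bowenH T (Z i) s ε N + ∑' i, δ' i := ENNReal.tsum_add
    _ ≤ ∑' i, bowenH T (Z i) s ε N + δ := by gcongr

variable (T s ε N) in
/-- The set function `Z ↦ H_N^s(Z, ε)` as an outer measure, which makes null-set arguments
(countable unions, Borel–Cantelli) available for it. -/
noncomputable def bowenOuterMeasure : OuterMeasure X where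
  measureOf Z := bowenH T Z s ε N
  empty := nonpos_iff_eq_zero.1 <| (bowenH_le_tsum countable_empty (by simp) (by simp)).trans_eq
    (by simp)
  mono := bowenH_mono
  iUnion_nat Z _ := bowenH_iUnion_le Z

lemma tsum_ofReal_exp_neg_mul_ne_top {a : ℝ} (ha : 0 < a) :
    ∑' n : ℕ, ENNReal.ofReal (Real.exp (-a * n)) ≠ ∞ := by
  refine Summable.tsum_ofReal_ne_top ?_
  simpa only [mul_comm] using Real.summable_exp_nat_mul_iff.2 (neg_lt_zero.2 ha)

lemma bowenH_frequently_eq_zero {Z : ℕ → Set X} {h : ℝ} (hs : h < s) {D : ℝ≥0∞} (hD : D ≠ ∞)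
    (hZ : ∀ n, N ≤ n → bowenH T (Z n) s ε N ≤ D * ENNReal.ofReal (Real.exp (-(s - h) * n))) :
    bowenH T {x | ∃ᶠ n in atTop, x ∈ Z n} s ε N = 0 := by
  have hsum : ∑' n, bowenOuterMeasure T s ε N {x | N ≤ n ∧ x ∈ Z n} ≠ ∞ := by
    refine ne_top_of_le_ne_top (b := ∑' n : ℕ, D * ENNReal.ofReal (Real.exp (-(s - h) * n))) ?_
      (ENNReal.tsum_le_tsum fun n => ?_)
    · rw [ENNReal.tsum_mul_left]
      exact ENNReal.mul_ne_top hD (tsum_ofReal_exp_neg_mul_ne_top (sub_pos.2 hs))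
    · by_cases hn : N ≤ n
      · exact (bowenH_mono fun x hx => hx.2).trans (hZ n hn)
      · simp [hn]
  refine measure_mono_null (μ := bowenOuterMeasure T s ε N) (fun x hx => ?_)
    (measure_setOfPred_frequently_eq_zero hsum)
  exact (hx.and_eventually (eventually_ge_atTop N)).mono fun n hn => hn.symm

end CoverEntropy

section Words

variable {α : Type*} {k m n : ℕ}

/-- The word of length `k` that the sequence `u` spells from position `i` on. -/
def block (u : ℕ → α) (k i : ℕ) : Fin k → α := fun q => u (q + i)

/-- The sequences whose first `n` blocks of length `k`, read with overlaps, have total code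
length at most `R` for the code length function `L`. -/
def lightSequences (L : (Fin k → α) → ℝ) (n : ℕ) (R : ℝ) : Set (ℕ → α) :=
  {u | ∑ i ∈ Finset.range n, L (block u k i) ≤ R}

lemma block_zero_eq_of_block_eq {u v : ℕ → α} {j : ℕ} (hk : 0 < k) (hj : j ≤ k)
    (hn : n ≤ k * m + k) (hfirst : block u k 0 = block v k 0)
    (hlast : block u k (k * m) = block v k (k * m))
    (hmid : ∀ l < m, block u k (k * l + j) = block v k (k * l + j)) :
    block u n 0 = block v n 0 := by
  have heq {p i : ℕ} (h : block u k p = block v k p) (hp : p ≤ i) (hi : i < p + k) :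
      u i = v i := by
    simpa [block, Nat.sub_add_cancel hp] using congrFun h ⟨i - p, by omega⟩
  funext ⟨i, hi⟩
  change u i = v i
  by_cases hstart : i < k
  · exact heq hfirst i.zero_le (by omega)
  by_cases hend : k * m ≤ i
  · exact heq hlast hend (by omega)
  have hdiv := Nat.div_add_mod (i - j) k
  have hmod := Nat.mod_lt (i - j) hk
  have hl : (i - j) / k < m := (Nat.div_lt_iff_lt_mul hk).2 (by rw [mul_comm]; omega)
  exact heq (hmid _ hl) (by omega) (by omega)

lemma sum_range_mul_eq_sum_sum {M : Type*} [AddCommMonoid M] (f : ℕ → M) (k m : ℕ) :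
    ∑ i ∈ Finset.range (k * m), f i
      = ∑ j ∈ Finset.range k, ∑ l ∈ Finset.range m, f (k * l + j) := by
  induction m with
  | zero => simp
  | succ m ih =>
    simp_rw [Finset.sum_range_succ _ m, Finset.sum_add_distrib, ← ih, Nat.mul_succ,
      Finset.sum_range_add]

lemma exists_lt_sum_range_le {f : ℕ → ℝ} (hk : 0 < k) {R : ℝ}
    (h : ∑ i ∈ Finset.range (k * m), f i ≤ k * R) :
    ∃ j < k, ∑ l ∈ Finset.range m, f (k * l + j) ≤ R := by
  rw [sum_range_mul_eq_sum_sum] at h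
  simpa using Finset.exists_le_of_sum_le (s := Finset.range k) (g := fun _ => R)
    ⟨0, Finset.mem_range.2 hk⟩ (h.trans_eq (by simp))

lemma ncard_sum_le_le_exp {β ι : Type*} [Fintype β] [Fintype ι] {L : β → ℝ}
    (hL : ∑ b, Real.exp (-L b) ≤ 1) (R : ℝ) :
    ({v : ι → β | ∑ i, L (v i) ≤ R}.ncard : ℝ) ≤ Real.exp R := by
  classical
  have hkraft : ∑ v : ι → β, Real.exp (-∑ i, L (v i)) ≤ 1 :=
    calc ∑ v : ι → β, Real.exp (-∑ i, L (v i))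
        = ∏ _i : ι, ∑ b, Real.exp (-L b) := by
          rw [Finset.prod_univ_sum, Fintype.piFinset_univ]
          simp only [← Finset.sum_neg_distrib, Real.exp_sum]
      _ ≤ 1 := Finset.prod_le_one (fun _ _ => by positivity) fun _ _ => hL
  have hle : ({v : ι → β | ∑ i, L (v i) ≤ R}.ncard : ℝ) * Real.exp (-R) ≤ 1 := by
    refine le_trans ?_ hkraft
    rw [ncard_eq_toFinset_card', ← nsmul_eq_mul]
    refine (Finset.card_nsmul_le_sum _ _ _ fun v hv => ?_).trans
      (Finset.sum_le_univ_sum_of_nonneg fun v => by positivity)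
    have hv : ∑ i, L (v i) ≤ R := by simpa using hv
    exact Real.exp_le_exp.2 (neg_le_neg hv)
  rwa [Real.exp_neg, ← div_eq_mul_inv, div_le_one (Real.exp_pos R)] at hle

lemma ncard_range_le_card_of_factorsThrough {γ δ F : Type*} [Finite F] {f : γ → δ} {g : γ → F}
    (h : f.FactorsThrough g) : (range f).ncard ≤ Nat.card F := by
  cases isEmpty_or_nonempty γ
  · simp [range_eq_empty]
  have : Nonempty δ := .map f inferInstance
  obtain ⟨e, rfl⟩ := (Function.factorsThrough_iff f).1 h
  rw [range_comp, ← ncard_univ]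
  exact (ncard_image_le (toFinite _)).trans (ncard_le_ncard (subset_univ _))

lemma nonneg_of_sum_exp_neg_le_one {β : Type*} [Fintype β] {L : β → ℝ}
    (hL : ∑ b, Real.exp (-L b) ≤ 1) (b : β) : 0 ≤ L b := by
  have : Real.exp (-L b) ≤ 1 :=
    (Finset.single_le_sum (fun b _ => (Real.exp_pos (-L b)).le) (Finset.mem_univ b)).trans hL
  simpa using this

/-- Some residue class `j` modulo `k` carries at most the average code length. The disjoint
blocks starting at the positions `≡ j` form a word of code length at most `R`, and only `2k`
further letters are needed to recover the whole prefix. -/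
lemma ncard_prefixes_lightSequences_le [Fintype α] (hk : 0 < k) {L : (Fin k → α) → ℝ}
    (hL : ∑ b, Real.exp (-L b) ≤ 1) (n : ℕ) (R : ℝ) :
    (((block · n 0) '' lightSequences L n (k * R)).ncard : ℝ)
      ≤ (k * (Fintype.card α ^ k * Fintype.card α ^ k) : ℕ) * Real.exp R := by
  classical
  have hkm : k * (n / k) ≤ n := Nat.mul_div_le n k
  have hoff (u : lightSequences L n (k * R)) :
      ∃ j < k, ∑ l ∈ Finset.range (n / k), L (block u k (k * l + j)) ≤ R :=
    exists_lt_sum_range_le hk <| (Finset.sum_le_sum_of_subset_of_nonneg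
      (Finset.range_subset_range.2 hkm) fun i _ _ => nonneg_of_sum_exp_neg_le_one hL _).trans u.2
  choose j hj hjsum using hoff
  let V : Set (Fin (n / k) → Fin k → α) := {v | ∑ l, L (v l) ≤ R}
  let code (u : lightSequences L n (k * R)) :
      (Fin k × ((Fin k → α) × (Fin k → α))) × V :=
    ((⟨j u, hj u⟩, block u k 0, block u k (k * (n / k))),
      ⟨fun l => block u k (k * l + j u), (Finset.sum_range _).symm.trans_le (hjsum u)⟩)
  have hcode : (fun u : lightSequences L n (k * R) => block (u : ℕ → α) n 0).FactorsThrough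
      code := by
    intro u v huv
    simp only [code, Prod.mk.injEq, Fin.mk.injEq, Subtype.mk.injEq] at huv
    obtain ⟨⟨hjuv, hfirst, hlast⟩, hmid⟩ := huv
    refine block_zero_eq_of_block_eq hk (hj u).le
      (Nat.lt_mul_div_succ n hk).le hfirst hlast fun l hl => ?_
    rw [congrFun hmid ⟨l, hl⟩, hjuv]
  calc (((block · n 0) '' lightSequences L n (k * R)).ncard : ℝ)
      ≤ Nat.card ((Fin k × ((Fin k → α) × (Fin k → α))) × V) := by
        rw [image_eq_range]
        exact_mod_cast ncard_range_le_card_of_factorsThrough hcode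
    _ = (k * (Fintype.card α ^ k * Fintype.card α ^ k) : ℕ) * V.ncard := by
        rw [Nat.card_prod, Nat.card_coe_set_eq]
        simp
    _ ≤ _ := by gcongr; exact ncard_sum_le_le_exp hL R

end Words

section Shadowing

variable [PseudoMetricSpace X] {α : Type*} {T : X → X} {c : α → X} {s ε : ℝ} {k n N : ℕ}

/-- The points whose orbit can be followed, with error less than `r`, by a sequence of labels
in `U`, the label `a` standing for the point `c a`. -/
def shadowedBy (T : X → X) (c : α → X) (r : ℝ) (U : Set (ℕ → α)) : Set X :=
  {x | ∃ u ∈ U, ∀ i, dist (T^[i] x) (c (u i)) < r}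

lemma bowenH_shadowedBy_le [Finite α] (U : Set (ℕ → α)) (hN : N ≤ n) :
    bowenH T (shadowedBy T c (ε / 2) U) s ε N
      ≤ ((block · n 0) '' U).ncard * ENNReal.ofReal (Real.exp (-s * n)) := by
  let cell (w : Fin n → α) : Set X := {x | ∀ i : Fin n, dist (T^[i] x) (c (w i)) < ε / 2}
  have hcell (w : Fin n → α) :
      bowenH T (cell w) s ε N ≤ ENNReal.ofReal (Real.exp (-s * n)) := by
    refine bowenH_le_of_forall_subset_bowenBall hN fun x hx y hy i hi => ?_
    exact (dist_triangle_right _ _ _).trans_lt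
      ((add_lt_add (hx ⟨i, hi⟩) (hy ⟨i, hi⟩)).trans_eq (add_halves ε))
  have hcover : shadowedBy T c (ε / 2) U ⊆ ⋃ w : (block · n 0) '' U, cell w := by
    rintro x ⟨u, hu, hx⟩
    exact mem_iUnion.2 ⟨⟨_, mem_image_of_mem _ hu⟩, fun i => hx i⟩
  calc bowenH T (shadowedBy T c (ε / 2) U) s ε N
      ≤ ∑' w : (block · n 0) '' U, bowenH T (cell w) s ε N :=
        (bowenH_mono hcover).trans (bowenH_iUnion_le _)
    _ ≤ ∑' _ : (block · n 0) '' U, ENNReal.ofReal (Real.exp (-s * n)) :=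
        ENNReal.tsum_le_tsum fun w => hcell w
    _ = ((block · n 0) '' U).ncard * ENNReal.ofReal (Real.exp (-s * n)) := by
        rw [ENNReal.tsum_set_const, ← (toFinite _).cast_ncard_eq, ENat.toENNReal_coe]

lemma bowenH_shadowedBy_lightSequences_le [Fintype α] (hk : 0 < k) {L : (Fin k → α) → ℝ}
    (hL : ∑ b, Real.exp (-L b) ≤ 1) (h : ℝ) (hN : N ≤ n) :
    bowenH T (shadowedBy T c (ε / 2) (lightSequences L n (k * (n * h)))) s ε N
      ≤ (k * (Fintype.card α ^ k * Fintype.card α ^ k) : ℕ)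
        * ENNReal.ofReal (Real.exp (-(s - h) * n)) := by
  refine (bowenH_shadowedBy_le _ hN).trans ?_
  rw [← ENNReal.ofReal_natCast, ← ENNReal.ofReal_natCast, ← ENNReal.ofReal_mul (by positivity),
    ← ENNReal.ofReal_mul (by positivity)]
  refine ENNReal.ofReal_le_ofReal ?_
  calc _ ≤ (k * (Fintype.card α ^ k * Fintype.card α ^ k) : ℕ) * Real.exp (n * h)
        * Real.exp (-s * n) := by
          gcongr
          exact ncard_prefixes_lightSequences_le hk hL n (n * h)
    _ = _ := by
        rw [mul_assoc, ← Real.exp_add]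
        ring_nf

lemma bowenH_frequently_shadowedBy_eq_zero [Fintype α] (hk : 0 < k) {L : (Fin k → α) → ℝ}
    (hL : ∑ b, Real.exp (-L b) ≤ 1) {h : ℝ} (hs : h < s) :
    bowenH T {x | ∃ᶠ n : ℕ in atTop,
      x ∈ shadowedBy T c (ε / 2) (lightSequences L n (k * (n * h)))} s ε N = 0 :=
  bowenH_frequently_eq_zero hs (ENNReal.natCast_ne_top _)
    fun _ => bowenH_shadowedBy_lightSequences_le hk hL h

end Shadowing

section ShannonCode

variable {β : Type*} [Fintype β] {p : β → ℝ} {R : ℝ}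

-- The Shannon code `-log p` itself is infinite where `p` vanishes, so `p` is shifted by `η`.
lemma exists_code_length (hp : ∀ b, 0 ≤ p b) (hp1 : ∑ b, p b ≤ 1)
    (hR : ∑ b, Real.negMulLog (p b) < R) :
    ∃ L : β → ℝ, ∑ b, Real.exp (-L b) < 1 ∧ ∑ b, p b * L b < R := by
  let M : ℝ := (Fintype.card β : ℝ)
  let L (η : ℝ) (b : β) : ℝ := Real.log (1 + (M + 1) * η) - Real.log (p b + η)
  have hcont : ContinuousAt (fun η => ∑ b, p b * L η b) 0 := by
    refine tendsto_finsetSum _ fun b _ => ?_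
    obtain hb | hb := (hp b).eq_or_lt
    · simp only [← hb, zero_mul, tendsto_const_nhds]
    · exact continuousAt_const.mul
        (.sub (.log (by fun_prop) (by simp)) (.log (by fun_prop) (by simpa using hb.ne')))
  have hzero : ∑ b, p b * L 0 b < R := by simpa [L, Real.negMulLog] using hR
  obtain ⟨η, hη, hη0⟩ := ((hcont.eventually_lt_const hzero).filter_mono
    nhdsWithin_le_nhds |>.and (eventually_mem_nhdsWithin (s := Ioi 0))).exists
  refine ⟨L η, ?_, hη⟩
  rw [mem_Ioi] at hη0
  have hden : 0 < 1 + (M + 1) * η := by positivity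
  calc ∑ b, Real.exp (-L η b) = (∑ b, p b + M * η) / (1 + (M + 1) * η) := by
        have hexp (b : β) : Real.exp (-L η b) = (p b + η) / (1 + (M + 1) * η) := by
          rw [neg_sub, Real.exp_sub, Real.exp_log (add_pos_of_nonneg_of_pos (hp b) hη0),
            Real.exp_log hden]
        simp only [hexp, ← Finset.sum_div, Finset.sum_add_distrib, Finset.sum_const,
          Finset.card_univ, nsmul_eq_mul, M]
    _ < 1 := by
        rw [div_lt_one hden]
        linarith

lemma exists_rat_code_length (hp : ∀ b, 0 ≤ p b) (hp1 : ∑ b, p b ≤ 1)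
    (hR : ∑ b, Real.negMulLog (p b) < R) :
    ∃ L : β → ℚ, ∑ b, Real.exp (-(L b : ℝ)) < 1 ∧ ∑ b, p b * L b < R := by
  have hopen : IsOpen {L : β → ℝ | ∑ b, Real.exp (-L b) < 1 ∧ ∑ b, p b * L b < R} :=
    .and (isOpen_lt (by fun_prop) continuous_const) (isOpen_lt (by fun_prop) continuous_const)
  exact (DenseRange.piMap fun _ : β => Rat.denseRange_cast).exists_mem_open hopen
    (exists_code_length hp hp1 hR)

end ShannonCode

section FiniteValued

variable {β : Type*}

lemma frontier_preimage_singleton_subset [TopologicalSpace X] (W : X → β) (b : β) :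
    frontier (W ⁻¹' {b}) ⊆ {y | ¬ ∀ᶠ z in 𝓝 y, W z = W y} := by
  intro y hy hloc
  by_cases hyb : W y = b
  · refine hy.2 (mem_interior_iff_mem_nhds.2 ?_)
    filter_upwards [hloc] with z hz using hz.trans hyb
  · refine mem_closure_iff_frequently.1 hy.1 ?_
    filter_upwards [hloc] with z hz hzb using hyb (hz.symm.trans hzb)

variable [MeasurableSpace β] [MeasurableSingletonClass β] [MeasurableSpace X] {W : X → β}

lemma integral_comp_eq_sum_preimage [Fintype β] (hW : Measurable W) (ν : Measure X)
    [IsFiniteMeasure ν] (g : β → ℝ) : ∫ y, g (W y) ∂ν = ∑ b, ν.real (W ⁻¹' {b}) * g b := by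
  rw [← integral_map hW.aemeasurable (Measurable.of_discrete (f := g)).aestronglyMeasurable,
    integral_fintype .of_finite]
  simp only [map_measureReal_apply hW (measurableSet_singleton _), smul_eq_mul]

lemma continuousAt_integral_comp [Finite β] [TopologicalSpace X] [OpensMeasurableSpace X]
    [HasOuterApproxClosed X] (hW : Measurable W) {μ : ProbabilityMeasure X}
    (hloc : ∀ᵐ y ∂(μ : Measure X), ∀ᶠ z in 𝓝 y, W z = W y) (g : β → ℝ) :
    ContinuousAt (fun ν : ProbabilityMeasure X => ∫ y, g (W y) ∂(ν : Measure X)) μ := by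
  have := Fintype.ofFinite β
  simp only [integral_comp_eq_sum_preimage hW]
  refine tendsto_finsetSum _ fun b _ => Tendsto.mul_const _ ?_
  have hnull : (μ : Measure X) (frontier (W ⁻¹' {b})) = 0 :=
    measure_mono_null (frontier_preimage_singleton_subset W b) hloc
  exact (ENNReal.tendsto_toReal (measure_ne_top _ _)).comp
    (ProbabilityMeasure.tendsto_measure_of_null_frontier_of_tendsto' tendsto_id hnull)

end FiniteValued

section Itinerary

variable {α : Type*} {T : X → X} {P : X → α}

/-- The sequence of labels which the partition `P` (encoded as a labelling of the points)
assigns to the orbit of `y`. -/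
def itinerary (T : X → X) (P : X → α) (y : X) : ℕ → α := fun i => P (T^[i] y)

lemma block_itinerary (k i : ℕ) (y : X) :
    block (itinerary T P y) k i = block (itinerary T P (T^[i] y)) k 0 :=
  funext fun _ => congrArg P (Function.iterate_add_apply T _ i y)

lemma measurable_block_itinerary [MeasurableSpace X] [MeasurableSpace α] (hT : Measurable T)
    (hP : Measurable P) (k i : ℕ) : Measurable fun y => block (itinerary T P y) k i :=
  measurable_pi_iff.2 fun _ => hP.comp (hT.iterate _)

lemma eventually_block_itinerary_eq [TopologicalSpace X] (hT : Continuous T) {y : X}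
    (hP : ∀ j, ∀ᶠ z in 𝓝 (T^[j] y), P z = P (T^[j] y)) (k i : ℕ) :
    ∀ᶠ z in 𝓝 y, block (itinerary T P z) k i = block (itinerary T P y) k i :=
  (eventually_all.2 fun _ => (hT.iterate _).continuousAt.eventually (hP _)).mono
    fun _ hz => funext hz

lemma sum_negMulLog_le_partInfo [Fintype α] [MeasurableSpace X] (μ : Measure X) {e : α → ℕ}
    (he : Function.Injective e) (k : ℕ) :
    ∑ b : Fin k → α, ENNReal.ofReal (Real.negMulLog
      (μ.real ((fun y => block (itinerary T P y) k 0) ⁻¹' {b}))) ≤ partInfo T μ (e ∘ P) k := by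
  let word (b : Fin k → α) : List ℕ := List.ofFn (e ∘ b)
  have hword : Function.Injective word := List.ofFn_injective.comp he.comp_left
  have hlist (y : X) : (List.range k).map (fun j => (e ∘ P) (T^[j] y))
      = word (block (itinerary T P y) k 0) := by
    rw [← List.map_coe_finRange_eq_range, List.map_map]
    exact List.ofFn_eq_map.symm
  rw [← tsum_fintype (L := SummationFilter.unconditional _)]
  refine le_trans (ENNReal.tsum_le_tsum fun b => ?_)
    (ENNReal.tsum_comp_le_tsum_of_injective hword _)
  simp only [hlist, preimage, mem_singleton_iff, hword.eq_iff]
  rfl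

lemma exists_sum_negMulLog_lt_of_ksEntropy_lt [Fintype α] [MeasurableSpace α]
    [MeasurableSingletonClass α] [MeasurableSpace X] (hP : Measurable P) {μ : Measure X}
    [IsProbabilityMeasure μ] {h : ℝ≥0} (hent : ksEntropy T μ < h) :
    ∃ k, 0 < k ∧ ∑ b : Fin k → α, Real.negMulLog
      (μ.real ((fun y => block (itinerary T P y) k 0) ⁻¹' {b})) < k * h := by
  obtain ⟨e, he⟩ := Countable.exists_injective_nat α
  have hlim : liminf (fun n : ℕ => partInfo T μ (e ∘ P) n / n) atTop < h := by
    refine lt_of_le_of_lt ?_ hent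
    exact le_iSup_of_le (e ∘ P) <| le_iSup₂_of_le (Measurable.of_discrete.comp hP)
      ((finite_range e).subset (range_comp_subset_range P e)) le_rfl
  obtain ⟨k, hk_info, hk⟩ :=
    ((frequently_lt_of_liminf_lt (by isBoundedDefault) hlim).and_eventually
      (eventually_gt_atTop 0)).exists
  refine ⟨k, hk, lt_of_not_ge fun hge => ?_⟩
  rw [ENNReal.div_lt_iff (.inl (by simpa using hk.ne')) (.inl (ENNReal.natCast_ne_top k))]
    at hk_info
  refine ((sum_negMulLog_le_partInfo μ he k).trans_lt hk_info).not_ge ?_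
  rw [← ENNReal.ofReal_sum_of_nonneg
    fun b _ => Real.negMulLog_nonneg measureReal_nonneg measureReal_le_one]
  refine le_trans (le_of_eq ?_) (ENNReal.ofReal_le_ofReal hge)
  rw [ENNReal.ofReal_mul (Nat.cast_nonneg k), ENNReal.ofReal_natCast, ENNReal.ofReal_coe_nnreal,
    mul_comm]

lemma exists_rat_code_integral_lt [Fintype α] [MeasurableSpace α] [MeasurableSingletonClass α]
    [MeasurableSpace X] (hT : Measurable T) (hP : Measurable P) {μ : Measure X}
    [IsProbabilityMeasure μ] {h : ℝ≥0} (hent : ksEntropy T μ < h) :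
    ∃ (k : ℕ) (L : (Fin k → α) → ℚ), 0 < k ∧ ∑ b, Real.exp (-(L b : ℝ)) < 1 ∧
      ∫ y, (L (block (itinerary T P y) k 0) : ℝ) ∂μ < k * h := by
  obtain ⟨k, hk, hsum⟩ := exists_sum_negMulLog_lt_of_ksEntropy_lt hP hent
  have hW : Measurable fun y => block (itinerary T P y) k 0 := measurable_block_itinerary hT hP k 0
  obtain ⟨L, hL, hLsum⟩ := exists_rat_code_length (fun _ => measureReal_nonneg)
    ((sum_measureReal_preimage_singleton _
      fun b _ => hW (measurableSet_singleton b)).trans_le measureReal_le_one) hsum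
  exact ⟨k, L, hk, hL,
    (integral_comp_eq_sum_preimage hW μ fun b => (L b : ℝ)).trans_lt hLsum⟩

end Itinerary

section NullBoundaryPartition

lemma eventually_lt_iff_of_ne {R : Type*} [LinearOrder R] [TopologicalSpace R]
    [OrderClosedTopology R] [TopologicalSpace X] {f : X → R} {y : X} {r : R}
    (hf : ContinuousAt f y) (h : f y ≠ r) : ∀ᶠ z in 𝓝 y, (f z < r ↔ f y < r) := by
  obtain h | h := h.lt_or_gt
  · filter_upwards [hf.eventually_lt_const h] with z hz using iff_of_true hz h
  · filter_upwards [hf.eventually_const_lt h] with z hz using iff_of_false hz.not_gt h.not_gt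

variable [MeasurableSpace X] {μ : Measure X} [SFinite μ]

lemma exists_mem_Ioo_forall_measure_level_eq_zero {ι : Type*} [Countable ι] {f : ι → X → ℝ}
    (hf : ∀ i, Measurable (f i)) {a b : ℝ} (hab : a < b) :
    ∃ r ∈ Ioo a b, ∀ i, μ {y | f i y = r} = 0 := by
  have hcount : (⋃ i, {r | 0 < μ {y | f i y = r}}).Countable :=
    countable_iUnion fun i => Measure.countable_meas_level_set_pos (hf i)
  obtain ⟨r, hr, har, hrb⟩ := (hcount.dense_compl ℝ).exists_between hab
  exact ⟨r, ⟨har, hrb⟩, fun i => by_contra fun h => hr (mem_iUnion.2 ⟨i, pos_iff_ne_zero.2 h⟩)⟩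

/-- Each point is labelled by a center at distance less than a radius for which the boundary
spheres, pulled back along the orbit, are null. -/
lemma exists_partition_ae_locally_constant [PseudoMetricSpace X] [OpensMeasurableSpace X]
    {T : X → X} (hT : Continuous T) {α : Type*} [Finite α] [MeasurableSpace α] {c : α → X}
    {r₀ r₁ : ℝ} (hr : r₀ < r₁) (hc : ∀ y, ∃ a, dist y (c a) < r₀) :
    ∃ P : X → α, Measurable P ∧ (∀ y, dist y (c (P y)) < r₁) ∧
      ∀ᵐ y ∂μ, ∀ j, ∀ᶠ z in 𝓝 (T^[j] y), P z = P (T^[j] y) := by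
  obtain ⟨r, ⟨hr₀, hr₁⟩, hnull⟩ := exists_mem_Ioo_forall_measure_level_eq_zero (μ := μ)
    (f := fun i : ℕ × α => fun y => dist (T^[i.1] y) (c i.2))
    (fun i => ((hT.iterate i.1).dist continuous_const).measurable) hr
  let near (y : X) : {A : Set α // A.Nonempty} :=
    ⟨{a | dist y (c a) < r}, (hc y).imp fun a ha => ha.trans hr₀⟩
  let label (A : {A : Set α // A.Nonempty}) : α := A.2.some
  refine ⟨label ∘ near, ?_, fun y => (near y).2.some_mem.trans hr₁, ?_⟩
  · refine Measurable.of_discrete.comp <| Measurable.subtype_mk <| measurable_set_iff.2 fun a => ?_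
    exact measurableSet_setOfPred.1 (measurableSet_ball (x := c a) (ε := r))
  · filter_upwards [ae_all_iff.2 fun i => measure_eq_zero_iff_ae_notMem.1 (hnull i)] with y hy j
    have hloc (a : α) : ∀ᶠ z in 𝓝 (T^[j] y), (a ∈ (near z).1 ↔ a ∈ (near (T^[j] y)).1) :=
      eventually_lt_iff_of_ne (f := fun z => dist z (c a)) (by fun_prop) (hy (j, a))
    exact (eventually_all.2 hloc).mono fun z hz => congrArg label (Subtype.ext (Set.ext hz))

end NullBoundaryPartition

section EmpiricalMeasure

variable [MeasurableSpace X] {T : X → X} {x : X} {n : ℕ}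

/-- The average of the point masses at the first `n + 1` points of the orbit of `x`. The index
is shifted by one with respect to the usual convention so that the mass is always `1`. -/
noncomputable def empiricalMeasure (T : X → X) (x : X) (n : ℕ) : ProbabilityMeasure X :=
  ⟨((n + 1 : ℕ) : ℝ≥0∞)⁻¹ • ∑ j ∈ Finset.range (n + 1), Measure.dirac (T^[j] x), ⟨by
    simpa using ENNReal.inv_mul_cancel (a := n + 1) (by simp) (by finiteness)⟩⟩

lemma integral_empiricalMeasure {f : X → ℝ} (hf : Measurable f) :
    ∫ y, f y ∂(empiricalMeasure T x n : Measure X)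
      = (∑ j ∈ Finset.range (n + 1), f (T^[j] x)) / (n + 1 : ℕ) := by
  have hint (y : X) : ∫ z, f z ∂Measure.dirac y = f y :=
    integral_dirac' f y hf.stronglyMeasurable
  rw [empiricalMeasure, ProbabilityMeasure.coe_mk, integral_smul_measure,
    integral_finsetSum_measure]
  · simp only [hint, smul_eq_mul, div_eq_inv_mul, ENNReal.toReal_inv, ENNReal.toReal_natCast]
  · exact fun j _ => integrable_dirac' hf.stronglyMeasurable (by simp)

lemma IsLimitMeasure.mapClusterPt [TopologicalSpace X] [OpensMeasurableSpace X]
    {μ : ProbabilityMeasure X} (hμ : IsLimitMeasure T x μ) :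
    MapClusterPt μ atTop (empiricalMeasure T x) := by
  obtain ⟨φ, hφ, hlim⟩ := hμ
  have hpred : Tendsto (fun m => φ m - 1) atTop atTop :=
    (tendsto_sub_atTop_nat 1).comp hφ.tendsto_atTop
  refine .of_comp hpred (Tendsto.mapClusterPt ?_)
  refine ProbabilityMeasure.tendsto_iff_forall_integral_tendsto.2 fun f => ?_
  refine (hlim f).congr' ?_
  filter_upwards [hφ.tendsto_atTop.eventually_gt_atTop 0] with m hm
  simp only [Function.comp_apply, integral_empiricalMeasure f.continuous.measurable,
    Nat.sub_add_cancel hm]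
  rfl

end EmpiricalMeasure

section LightShadowing

variable [PseudoMetricSpace X] [MeasurableSpace X] [BorelSpace X] {T : X → X}

/-- Near `μ`, the `ν`-average of the code length is less than `k * h` because the partition is
`μ`-almost everywhere locally constant; an empirical measure `ν` near `μ` makes the itinerary of
`x` light. -/
lemma exists_frequently_mem_shadowedBy_lightSequences (hT : Continuous T) {x : X}
    {μ : ProbabilityMeasure X} (hμ : MapClusterPt μ atTop (empiricalMeasure T x)) {h : ℝ≥0}
    (hent : ksEntropy T (μ : Measure X) < h) {α : Type*} [Fintype α] {c : α → X} {r₀ r₁ : ℝ}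
    (hr : r₀ < r₁) (hc : ∀ y, ∃ a, dist y (c a) < r₀) :
    ∃ (k : ℕ) (L : (Fin k → α) → ℚ), 0 < k ∧ ∑ b, Real.exp (-(L b : ℝ)) < 1 ∧
      ∃ᶠ n : ℕ in atTop,
        x ∈ shadowedBy T c r₁ (lightSequences (fun b => (L b : ℝ)) n (k * (n * h))) := by
  let _ : MeasurableSpace α := ⊤
  obtain ⟨P, hP, hPc, hPloc⟩ :=
    exists_partition_ae_locally_constant (μ := (μ : Measure X)) hT hr hc
  obtain ⟨k, L, hk, hL, hint⟩ := exists_rat_code_integral_lt hT.measurable hP hent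
  refine ⟨k, L, hk, hL, ?_⟩
  have hW : Measurable fun y => block (itinerary T P y) k 0 :=
    measurable_block_itinerary hT.measurable hP k 0
  have hLW : Measurable fun y => (L (block (itinerary T P y) k 0) : ℝ) :=
    (Measurable.of_discrete (f := fun b => (L b : ℝ))).comp hW
  have hcont := continuousAt_integral_comp hW
    (hPloc.mono fun y hy => eventually_block_itinerary_eq hT hy k 0) fun b => (L b : ℝ)
  refine (tendsto_add_atTop_nat 1).frequently
    ((hμ.frequently (hcont.eventually_lt_const hint)).mono fun n hn => ?_)
  rw [integral_empiricalMeasure hLW, div_lt_iff₀ (by positivity)] at hn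
  refine ⟨itinerary T P x, ?_, fun i => hPc _⟩
  simp only [lightSequences, mem_ofPred_eq, block_itinerary k _ x]
  linarith

end LightShadowing

lemma exists_fin_cover_of_totallyBounded [PseudoMetricSpace X]
    (hX : TotallyBounded (univ : Set X)) {r : ℝ} (hr : 0 < r) :
    ∃ (K : ℕ) (c : Fin K → X), ∀ y, ∃ a, dist y (c a) < r := by
  obtain ⟨S, hS, hcover⟩ := Metric.totallyBounded_iff.1 hX r hr
  obtain ⟨K, c, -, rfl⟩ := hS.fin_param
  exact ⟨K, c, fun y => by simpa using hcover (mem_univ y)⟩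

theorem bowen_lemma_general [PseudoMetricSpace X] [MeasurableSpace X] [BorelSpace X]
    (hX : TotallyBounded (univ : Set X)) {T : X → X} (hT : Continuous T) (t : ℝ≥0∞) :
    bowenEntropy T {x | ∃ μ : ProbabilityMeasure X,
      MapClusterPt μ atTop (empiricalMeasure T x) ∧ ksEntropy T (μ : Measure X) ≤ t} ≤ t := by
  refine iSup₂_le fun ε hε => bowenEntropyRes_le fun s hs N => ?_
  obtain ⟨h, hth, hhs⟩ := ENNReal.lt_iff_exists_nnreal_btwn.1 hs
  obtain ⟨K, c, hc⟩ := exists_fin_cover_of_totallyBounded hX (div_pos hε zero_lt_four)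
  let Code := {p : Σ k, (Fin k → Fin K) → ℚ // 0 < p.1 ∧ ∑ b, Real.exp (-(p.2 b : ℝ)) < 1}
  let Light (p : Code) : Set X := {x | ∃ᶠ n : ℕ in atTop, x ∈ shadowedBy T c (ε / 2)
    (lightSequences (fun b => (p.1.2 b : ℝ)) n (p.1.1 * (n * h)))}
  refine measure_mono_null (μ := bowenOuterMeasure T s ε N) (t := ⋃ p, Light p) ?_
    (measure_iUnion_null fun p => ?_)
  · rintro x ⟨μ, hμ, hent⟩
    obtain ⟨k, L, hk, hL, hx⟩ := exists_frequently_mem_shadowedBy_lightSequences hT hμ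
      (hent.trans_lt hth) (show ε / 4 < ε / 2 by linarith) hc
    exact mem_iUnion.2 ⟨⟨⟨k, L⟩, hk, hL⟩, hx⟩
  · exact bowenH_frequently_shadowedBy_eq_zero p.2.1 p.2.2.le (by exact_mod_cast hhs)

/-- **Lemma 2.1 (Bowen).** For `t ≥ 0`, the set
`B^{(t)} = {x : ∃ μ ∈ V(x), h_μ ≤ t}` has Bowen topological entropy at most `t`. -/
theorem bowen_lemma {X : Type*} [MetricSpace X] [CompactSpace X]
    [MeasurableSpace X] [BorelSpace X] (T : X → X) (hT : Continuous T)
    (t : ℝ) (ht : 0 ≤ t) :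
    bowenEntropy T {x : X | ∃ μ : Measure X, IsProbabilityMeasure μ ∧
        IsLimitMeasure T x μ ∧ ksEntropy T μ ≤ ENNReal.ofReal t} ≤
      ENNReal.ofReal t := by
  refine (bowenEntropy_mono ?_).trans (bowen_lemma_general isCompact_univ.totallyBounded hT _)
  rintro _ ⟨μ, hprob, hlim, hent⟩
  exact ⟨⟨μ, hprob⟩, IsLimitMeasure.mapClusterPt hlim, hent⟩
end
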